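/- On ℝ² consider the vector field X(x,y) = (x² + y²)·(−y, x), whose flow φ rotates each point p by angle ‖p‖²·t (i.e. φ_t(p) = R_{‖p‖² t}(p), where R_θ is rotation by θ about the origin), and consider the compact φ-invariant set Λ = {p ∈ ℝ² : ‖p‖ = e^{−n} for some integer n ≥ 1} ∪ {(0,0)}. Then the restricted flow φ|Λ is not efficient. -/

import Mathlib

open Metric Set Function

noncomputable section

/-- The set of increasing homeomorphisms of `ℝ`, viewed as continuous strictly
increasing surjections `ℝ → ℝ`. -/
def IsHplus (h : ℝ → ℝ) : Prop :=
  Continuous h ∧ StrictMono h ∧ Function.Surjective h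

/-- Increasing homeomorphisms of `ℝ` fixing `0`. -/
def IsHplus0 (h : ℝ → ℝ) : Prop := IsHplus h ∧ h 0 = 0

/-- The orbit `φ_ℝ(x)` of a point under a flow. -/
def orb {α : Type*} (φ : ℝ → α → α) (x : α) : Set α := Set.range fun t => φ t x

/-- The orbit segment `φ_{[a,b]}(x)` (where `[a,b]` is the closed interval between
`a` and `b`, also when `a > b`). -/
def arc {α : Type*} (φ : ℝ → α → α) (x : α) (a b : ℝ) : Set α :=
  (fun t => φ t x) '' Set.uIcc a b

abbrev Euc (d : ℕ) := EuclideanSpace ℝ (Fin d)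

/-- A flow on a subset `M` of a topological space: continuous on `ℝ × M`, maps `M`
to itself, `φ_0 = id` and `φ_{s+t} = φ_s ∘ φ_t` on `M`. -/
def FlowOn {α : Type*} [TopologicalSpace α] (φ : ℝ → α → α) (M : Set α) : Prop :=
  ContinuousOn (fun p : ℝ × α => φ p.1 p.2) (Set.univ ×ˢ M) ∧
  (∀ t : ℝ, Set.MapsTo (φ t) M M) ∧ (∀ x ∈ M, φ 0 x = x) ∧
  ∀ s t : ℝ, ∀ x ∈ M, φ (s + t) x = φ s (φ t x)

/-- The fixed points of the flow lying in `M`. -/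
def fixOn {α : Type*} (φ : ℝ → α → α) (M : Set α) : Set α :=
  {σ ∈ M | ∀ t : ℝ, φ t σ = σ}

/-- `φ|Λ` is efficient: there is `δ* > 0` such that whenever `0 < δ < δ*`,
`x ∈ Λ \ fix(φ)`, `g ∈ H⁺(ℝ)`, `dist (φ_t x) (φ_{g t} x) < δ‖X (φ_t x)‖` for all `t`
and `diam (φ_{[t, g t]} x) < δ*` for all `t`, then
`φ_{[t, g t]} x ⊆ B(φ_t x, δ‖X (φ_t x)‖)` for all `t`. -/
def Efficient {d : ℕ} (φ : ℝ → Euc d → Euc d) (X : Euc d → Euc d)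
    (Λ : Set (Euc d)) : Prop :=
  ∃ δs > (0 : ℝ), ∀ δ : ℝ, 0 < δ → δ < δs → ∀ x ∈ Λ, (¬ ∀ t : ℝ, φ t x = x) →
    ∀ g : ℝ → ℝ, IsHplus g →
    (∀ t : ℝ, dist (φ t x) (φ (g t) x) < δ * ‖X (φ t x)‖) →
    (∀ t : ℝ, Metric.diam (arc φ x t (g t)) < δs) →
    ∀ t : ℝ, arc φ x t (g t) ⊆ Metric.ball (φ t x) (δ * ‖X (φ t x)‖)

/-- Rotation of the plane by angle `θ` about the origin. -/
def rot (θ : ℝ) (p : Euc 2) : Euc 2 :=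
  (WithLp.equiv 2 (Fin 2 → ℝ)).symm
    ![Real.cos θ * p 0 - Real.sin θ * p 1, Real.sin θ * p 0 + Real.cos θ * p 1]

/-- The vector field `X(x, y) = (x² + y²)·(−y, x)` on `ℝ²`. -/
def Xex (p : Euc 2) : Euc 2 :=
  (WithLp.equiv 2 (Fin 2 → ℝ)).symm
    ![(p 0 ^ 2 + p 1 ^ 2) * (-(p 1)), (p 0 ^ 2 + p 1 ^ 2) * p 0]

/-- The flow of `Xex`: it rotates each point `p` by the angle `‖p‖² · t`. -/
def phiEx (t : ℝ) (p : Euc 2) : Euc 2 := rot (‖p‖ ^ 2 * t) p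

/-- The compact invariant set
`Λ = {p ∈ ℝ² : ‖p‖ = e^{−n}, n ∈ ℤ, n ≥ 1} ∪ {(0,0)}`. -/
def LamEx : Set (Euc 2) :=
  {p : Euc 2 | ∃ n : ℕ, 1 ≤ n ∧ ‖p‖ = Real.exp (-(n : ℝ))} ∪ {0}

/-!
Along a periodic orbit of period `T`, the shift `g t = t + T` satisfies `φ_{g t} x = φ_t x`, while
the segment `φ_{[t, g t]} x` is the whole orbit. If the orbit has diameter less than `δ*`,
efficiency confines it to a ball of radius `δ‖X x‖` for every small `δ`, that is, to a point. Hence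
the diameters of the nontrivial periodic orbits of an efficient flow are bounded below, whereas here
the orbits are circles about the origin that become arbitrarily small in `Λ`.
-/

open Filter Topology

theorem isHplus_add_const (c : ℝ) : IsHplus (· + c) :=
  ⟨continuous_add_const c, add_left_strictMono, add_right_surjective c⟩

theorem arc_add_period_eq_orb {α : Type*} {φ : ℝ → α → α} {x : α} {T : ℝ}
    (hφ : Periodic (φ · x) T) (hT : T ≠ 0) (a : ℝ) : arc φ x a (a + T) = orb φ x :=
  hφ.image_uIcc hT a

theorem not_fixed_of_orb_nontrivial {α : Type*} {φ : ℝ → α → α} {x : α}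
    (hx : (orb φ x).Nontrivial) : ¬ ∀ t, φ t x = x := by
  intro hfix
  refine hx.not_subset_singleton (x := x) ?_
  rintro _ ⟨t, rfl⟩
  exact hfix t

theorem Efficient.exists_le_diam_periodic_orb {d : ℕ} {φ : ℝ → Euc d → Euc d}
    {X : Euc d → Euc d} {Λ : Set (Euc d)} (h : Efficient φ X Λ) :
    ∃ ε > 0, ∀ x ∈ Λ, ∀ T ≠ 0, Periodic (φ · x) T → (∀ t, X (φ t x) ≠ 0) →
      (orb φ x).Nontrivial → ε ≤ diam (orb φ x) := by
  obtain ⟨ε, hε, heff⟩ := h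
  refine ⟨ε, hε, fun x hxΛ T hT hper hX hnontriv => ?_⟩
  by_contra! hdiam
  have harc : ∀ t, arc φ x t (t + T) = orb φ x := arc_add_period_eq_orb hper hT
  obtain ⟨y, hy, hyx⟩ := hnontriv.exists_ne (φ 0 x)
  have hXpos : ∀ t, 0 < ‖X (φ t x)‖ := fun t => norm_pos_iff.2 (hX t)
  obtain ⟨δ, hδ, hδlt⟩ :=
    exists_between (lt_min hε (div_pos (dist_pos.2 hyx) (hXpos 0)))
  obtain ⟨hδε, hδy⟩ := lt_min_iff.1 hδlt
  have horb : arc φ x 0 (0 + T) ⊆ ball (φ 0 x) (δ * ‖X (φ 0 x)‖) := by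
    refine heff δ hδ hδε x hxΛ (not_fixed_of_orb_nontrivial hnontriv) (· + T)
      (isHplus_add_const T) (fun t => ?_) (fun t => (harc t).symm ▸ hdiam) 0
    have hshift : φ (t + T) x = φ t x := hper t
    rw [hshift, dist_self]
    exact mul_pos hδ (hXpos t)
  have hy_near : dist y (φ 0 x) < δ * ‖X (φ 0 x)‖ := horb (harc 0 ▸ hy)
  exact hy_near.not_gt ((lt_div_iff₀ (hXpos 0)).1 hδy)

theorem norm_rot (θ : ℝ) (p : Euc 2) : ‖rot θ p‖ = ‖p‖ := by
  refine (sq_eq_sq₀ (norm_nonneg _) (norm_nonneg _)).1 ?_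
  simp only [EuclideanSpace.real_norm_sq_eq, Fin.sum_univ_two, rot, WithLp.equiv_symm_apply,
    Matrix.cons_val_zero, Matrix.cons_val_one]
  linear_combination (p 0 ^ 2 + p 1 ^ 2) * Real.sin_sq_add_cos_sq θ

theorem rot_zero (p : Euc 2) : rot 0 p = p := by
  ext i
  fin_cases i <;> simp [rot]

theorem rot_pi (p : Euc 2) : rot Real.pi p = -p := by
  ext i
  fin_cases i <;> simp [rot]

theorem periodic_rot (p : Euc 2) : Periodic (rot · p) (2 * Real.pi) := by
  intro θ
  simp only [rot, Real.cos_add_two_pi, Real.sin_add_two_pi]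

theorem Xex_eq_smul_rot (p : Euc 2) : Xex p = ‖p‖ ^ 2 • rot (Real.pi / 2) p := by
  ext i
  fin_cases i <;> simp [Xex, rot, EuclideanSpace.real_norm_sq_eq]

theorem Xex_ne_zero {p : Euc 2} (hp : p ≠ 0) : Xex p ≠ 0 := by
  rw [← norm_ne_zero_iff] at hp ⊢
  rw [Xex_eq_smul_rot, norm_smul, norm_rot, norm_pow, norm_norm]
  exact mul_ne_zero (pow_ne_zero 2 hp) hp

theorem norm_phiEx (t : ℝ) (p : Euc 2) : ‖phiEx t p‖ = ‖p‖ :=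
  norm_rot _ p

theorem phiEx_ne_zero {p : Euc 2} (hp : p ≠ 0) (t : ℝ) : phiEx t p ≠ 0 := by
  rwa [← norm_ne_zero_iff, norm_phiEx, norm_ne_zero_iff]

theorem periodic_phiEx (p : Euc 2) : Periodic (phiEx · p) ((‖p‖ ^ 2)⁻¹ * (2 * Real.pi)) :=
  (periodic_rot p).const_mul (‖p‖ ^ 2)

theorem orb_phiEx_nontrivial {p : Euc 2} (hp : p ≠ 0) : (orb phiEx p).Nontrivial := by
  have hsq : ‖p‖ ^ 2 ≠ 0 := pow_ne_zero 2 (norm_ne_zero_iff.2 hp)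
  have hstart : phiEx 0 p = p := by rw [phiEx, mul_zero, rot_zero]
  have hhalf : phiEx (Real.pi / ‖p‖ ^ 2) p = -p := by
    rw [phiEx, mul_div_cancel₀ _ hsq, rot_pi]
  have : IsAddTorsionFree (Euc 2) := .of_isTorsionFree ℝ _
  exact ⟨p, ⟨0, hstart⟩, -p, ⟨_, hhalf⟩, self_ne_neg.2 hp⟩

theorem diam_orb_phiEx_le (p : Euc 2) : diam (orb phiEx p) ≤ 2 * ‖p‖ := by
  refine diam_le_of_subset_closedBall (norm_nonneg p) (x := 0) ?_
  rintro _ ⟨t, rfl⟩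
  exact mem_closedBall_zero_iff.2 (norm_phiEx t p).le

theorem accPt_zero_LamEx : AccPt 0 (𝓟 LamEx) := by
  obtain ⟨e, he⟩ := exists_norm_eq (Euc 2) zero_le_one
  have hlim : Tendsto (fun n : ℕ => Real.exp (-(n : ℝ)) • e) atTop (𝓝 0) := by
    simpa only [zero_smul, comp_def] using
      (Real.tendsto_exp_neg_atTop_nhds_zero.comp tendsto_natCast_atTop_atTop).smul_const e
  refine accPt_iff_frequently.2 (hlim.frequently (Eventually.frequently ?_))
  filter_upwards [eventually_ge_atTop 1] with n hn
  have hnorm : ‖Real.exp (-(n : ℝ)) • e‖ = Real.exp (-(n : ℝ)) := by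
    rw [norm_smul, he, mul_one, Real.norm_of_nonneg (Real.exp_nonneg _)]
  exact ⟨norm_pos_iff.1 (hnorm.symm.subst (Real.exp_pos _)), Or.inl ⟨n, hn, hnorm⟩⟩

theorem not_efficient_phiEx_general {Λ : Set (Euc 2)} (hΛ : AccPt 0 (𝓟 Λ)) :
    ¬ Efficient phiEx Xex Λ := by
  intro heff
  obtain ⟨ε, hε, hdiam⟩ := heff.exists_le_diam_periodic_orb
  obtain ⟨p, ⟨hp, hpΛ⟩, hpε⟩ :=
    ((accPt_iff_frequently.1 hΛ).and_eventually (ball_mem_nhds 0 (half_pos hε))).exists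
  rw [dist_zero_right] at hpε
  have hT : (‖p‖ ^ 2)⁻¹ * (2 * Real.pi) ≠ 0 :=
    mul_ne_zero (inv_ne_zero (pow_ne_zero 2 (norm_ne_zero_iff.2 hp))) Real.two_pi_pos.ne'
  have hle : ε ≤ diam (orb phiEx p) := hdiam p hpΛ _ hT (periodic_phiEx p)
    (fun t => Xex_ne_zero (phiEx_ne_zero hp t)) (orb_phiEx_nontrivial hp)
  linarith [diam_orb_phiEx_le p]

/-- The flow of `X(x,y) = (x² + y²)(−y, x)` restricted to
`Λ = {‖p‖ = e^{−n} : n ≥ 1} ∪ {0}` is not efficient. -/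
theorem not_efficient_phiEx : ¬ Efficient phiEx Xex LamEx :=
  not_efficient_phiEx_general accPt_zero_LamEx
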